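/- Assume Conditions 10, 11 and 12 hold. Then there exist n×n matrices C_{n,θ,j,k} (for j,k ∈ {1,…,p}, θ ∈ int Θ, n ∈ ℕ) such that the second-order partial derivatives of the cross-validation criterion satisfy (∇²M_n(θ))_{j,k} = (1/n) y^{(n)⊤} C_{n,θ,j,k} y^{(n)}, and there is a constant C_C < ∞ such that for all n ∈ ℕ, max_{j,k=1,…,p} sup_{θ∈int Θ} ρ₁(C_{n,θ,j,k}) ≤ C_C, where ρ₁ denotes the largest singular value. -/

import Mathlib

open MeasureTheory ProbabilityTheory Set Matrix

noncomputable section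

/-- `ℝ^p` with the Euclidean norm. -/
abbrev Euc (p : ℕ) := EuclideanSpace ℝ (Fin p)

/-- Build a Euclidean vector from a plain function. -/
def toEuc {p : ℕ} (v : Fin p → ℝ) : Euc p := (WithLp.equiv 2 (Fin p → ℝ)).symm v

/-- The standard Gaussian distribution on `ℝ^p`. -/
def stdGaussian (p : ℕ) : Measure (Euc p) :=
  (Measure.pi fun _ : Fin p => gaussianReal 0 1).map (toEuc (p := p))

/-- The `L¹` Wasserstein distance between two distributions on `ℝ^p`
(dual formulation: supremum over `1`-Lipschitz test functions). -/
def W1 {p : ℕ} (P Q : Measure (Euc p)) : ℝ :=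
  sSup { r | ∃ f : Euc p → ℝ, LipschitzWith 1 f ∧
    r = |(∫ x, f x ∂P) - (∫ x, f x ∂Q)| }

/-- Partial derivative in the `i`-th coordinate direction. -/
def pder {p : ℕ} (i : Fin p) (f : Euc p → ℝ) (θ : Euc p) : ℝ :=
  fderiv ℝ f θ (EuclideanSpace.single i 1)

/-- The gradient as a Euclidean vector. -/
def gradVec {p : ℕ} (f : Euc p → ℝ) (θ : Euc p) : Euc p := toEuc fun i => pder i f θ

/-- The correlation matrix `R_{n,θ}` with entries `k_θ(x_i − x_j)`. -/
def Rmat {d p : ℕ} (x : ℕ → Euc d) (kern : Euc p → Euc d → ℝ) (n : ℕ) (θ : Euc p) :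
    Matrix (Fin n) (Fin n) ℝ :=
  Matrix.of fun i j => kern θ (x i - x j)

/-- `diag(M)`: set the off-diagonal entries of `M` to zero. -/
def diagPart {n : ℕ} (A : Matrix (Fin n) (Fin n) ℝ) : Matrix (Fin n) (Fin n) ℝ :=
  Matrix.diagonal A.diag

/-- The leave-one-out cross-validation criterion
`M_n(θ) = (1/n) yᵀ R_{n,θ}⁻¹ diag(R_{n,θ}⁻¹)⁻² R_{n,θ}⁻¹ y`. -/
def CVcrit {d p : ℕ} (x : ℕ → Euc d) (kern : Euc p → Euc d → ℝ) (n : ℕ)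
    (y : Fin n → ℝ) (θ : Euc p) : ℝ :=
  (1 / n) *
    (y ⬝ᵥ ((Rmat x kern n θ)⁻¹ * ((diagPart ((Rmat x kern n θ)⁻¹))⁻¹) ^ 2 *
      (Rmat x kern n θ)⁻¹).mulVec y)

/-- `opBound A C` means that the largest singular value of `A` is at most `C`. -/
def opBound {n : ℕ} (A : Matrix (Fin n) (Fin n) ℝ) (C : ℝ) : Prop :=
  ∀ v : Fin n → ℝ,
    Real.sqrt (∑ i, A.mulVec v i ^ 2) ≤ C * Real.sqrt (∑ i, v i ^ 2)

/-!
The decay of the kernel and the separation of the points bound the absolute row and column sums of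
`R` and of its partial derivatives, and hence, by the Schur test, their operator norms, uniformly
in `n` and `θ`. Families of matrices whose partial derivatives up to order `m` are uniformly bounded
are stable under sums, products, bounded linear maps, and also under inversion when the inverses
are uniformly bounded, since `∂(A⁻¹) = -A⁻¹ (∂A) A⁻¹`. A lower bound `c` on the quadratic form of
`R`, together with `‖R‖ ≤ B`, gives the lower bound `c / B ^ 2` on that of `R⁻¹`, and restricting
to coordinate vectors carries it over to `diag(R⁻¹)`; so both inverses in
`R⁻¹ diag(R⁻¹)⁻² R⁻¹` are bounded and this matrix belongs to the class with `m = 2`. Its second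
partial derivatives are the required matrices, because the criterion is linear in it.
-/

section Packing

open Metric

variable {E : Type*} [NormedAddCommGroup E]

theorem one_div_one_add_rpow_le {r t : ℝ} (hr : 0 ≤ r) (ht : 0 ≤ t) :
    1 / (1 + t ^ r) ≤ 2 ^ r * (1 + t) ^ (-r) := by
  have htr : 0 ≤ t ^ r := Real.rpow_nonneg ht r
  rw [Real.rpow_neg (by positivity), ← div_eq_mul_inv,
    div_le_div_iff₀ (by positivity) (by positivity), one_mul]
  rcases le_total t 1 with h | h
  · calc (1 + t) ^ r ≤ 2 ^ r := by gcongr; linarith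
      _ ≤ 2 ^ r * (1 + t ^ r) := le_mul_of_one_le_right (by positivity) (by linarith)
  · calc (1 + t) ^ r ≤ (2 * t) ^ r := by gcongr; linarith
      _ = 2 ^ r * t ^ r := Real.mul_rpow (by norm_num) ht
      _ ≤ 2 ^ r * (1 + t ^ r) := by gcongr; linarith

theorem one_add_norm_rpow_neg_le_of_mem_ball {r ρ : ℝ} (hr : 0 ≤ r) {a u : E}
    (hu : u ∈ ball a ρ) : (1 + ‖a‖) ^ (-r) ≤ (1 + ρ) ^ r * (1 + ‖u‖) ^ (-r) := by
  have hρ : 0 < ρ := pos_of_mem_ball hu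
  have hua : ‖u‖ ≤ ‖a‖ + ρ := by
    linarith [norm_le_norm_add_norm_sub' u a, mem_ball_iff_norm.mp hu]
  have hmul : 1 + ‖u‖ ≤ (1 + ρ) * (1 + ‖a‖) := by nlinarith [norm_nonneg a]
  rw [Real.rpow_neg (by positivity), Real.rpow_neg (by positivity), ← div_eq_mul_inv,
    inv_eq_one_div, div_le_div_iff₀ (by positivity) (by positivity), one_mul,
    ← Real.mul_rpow (by positivity) (by positivity)]
  gcongr

variable [MeasurableSpace E] (μ : Measure E)

/-- A bound for the sum of `1 / (1 + ‖z‖ ^ r)` over the points `z` of a `δ`-separated family,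
obtained by comparing the sum with the integral of `(1 + ‖u‖) ^ (-r)` over disjoint balls of
radius `δ / 2`. -/
def packingConst (δ r : ℝ) : ℝ :=
  2 ^ r * ((1 + δ / 2) ^ r * (∫ u, (1 + ‖u‖) ^ (-r) ∂μ) / μ.real (ball 0 (δ / 2)))

theorem packingConst_nonneg {δ : ℝ} (hδ : 0 ≤ δ) (r : ℝ) : 0 ≤ packingConst μ δ r := by
  unfold packingConst
  positivity

variable [NormedSpace ℝ E] [FiniteDimensional ℝ E] [BorelSpace E] [μ.IsAddHaarMeasure]

theorem one_add_norm_rpow_neg_mul_measureReal_ball_le {r : ℝ}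
    (hr : (Module.finrank ℝ E : ℝ) < r) (a : E) (ρ : ℝ) :
    (1 + ‖a‖) ^ (-r) * μ.real (ball 0 ρ) ≤
      (1 + ρ) ^ r * ∫ u in ball a ρ, (1 + ‖u‖) ^ (-r) ∂μ := by
  have hr0 : 0 ≤ r := (Nat.cast_nonneg _).trans hr.le
  calc (1 + ‖a‖) ^ (-r) * μ.real (ball 0 ρ)
      = ∫ _ in ball a ρ, (1 + ‖a‖) ^ (-r) ∂μ := by
        rw [setIntegral_const, smul_eq_mul, mul_comm, measureReal_def, measureReal_def,
          μ.addHaar_ball_center a]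
    _ ≤ ∫ u in ball a ρ, (1 + ρ) ^ r * (1 + ‖u‖) ^ (-r) ∂μ :=
        setIntegral_mono_on (integrableOn_const measure_ball_lt_top.ne)
          ((integrable_one_add_norm hr).const_mul _).integrableOn measurableSet_ball
          fun _ hu => one_add_norm_rpow_neg_le_of_mem_ball hr0 hu
    _ = (1 + ρ) ^ r * ∫ u in ball a ρ, (1 + ‖u‖) ^ (-r) ∂μ := integral_const_mul ..

theorem sum_setIntegral_ball_le {ι : Type*} [Fintype ι] {x : ι → E} {δ r : ℝ}
    (hr : (Module.finrank ℝ E : ℝ) < r) (hx : Pairwise fun i j => δ ≤ ‖x i - x j‖) :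
    ∑ i, ∫ u in ball (x i) (δ / 2), (1 + ‖u‖) ^ (-r) ∂μ ≤ ∫ u, (1 + ‖u‖) ^ (-r) ∂μ := by
  have hint : Integrable (fun u : E => (1 + ‖u‖) ^ (-r)) μ := integrable_one_add_norm hr
  have hdisj : Pairwise (Function.onFun Disjoint fun i => ball (x i) (δ / 2)) := fun i j hij =>
    ball_disjoint_ball (by rw [add_halves, dist_eq_norm]; exact hx hij)
  rw [← integral_iUnion_fintype (fun _ => measurableSet_ball) hdisj
    fun _ => hint.integrableOn]
  exact setIntegral_le_integral hint (.of_forall fun u => by positivity)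

theorem sum_one_div_one_add_norm_rpow_le {ι : Type*} [Fintype ι] {x : ι → E} {δ r : ℝ}
    (hδ : 0 < δ) (hr : (Module.finrank ℝ E : ℝ) < r)
    (hx : Pairwise fun i j => δ ≤ ‖x i - x j‖) :
    ∑ i, 1 / (1 + ‖x i‖ ^ r) ≤ packingConst μ δ r := by
  have hr0 : 0 ≤ r := (Nat.cast_nonneg _).trans hr.le
  have hball : 0 < μ.real (ball (0 : E) (δ / 2)) :=
    ENNReal.toReal_pos (measure_ball_pos _ _ (by positivity)).ne' measure_ball_lt_top.ne
  calc ∑ i, 1 / (1 + ‖x i‖ ^ r)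
      ≤ ∑ i, 2 ^ r * (1 + ‖x i‖) ^ (-r) :=
        Finset.sum_le_sum fun i _ => one_div_one_add_rpow_le hr0 (norm_nonneg _)
    _ ≤ ∑ i, 2 ^ r * ((1 + δ / 2) ^ r * (∫ u in ball (x i) (δ / 2), (1 + ‖u‖) ^ (-r) ∂μ) /
          μ.real (ball 0 (δ / 2))) := by
        gcongr with i
        rw [le_div_iff₀ hball]
        exact one_add_norm_rpow_neg_mul_measureReal_ball_le μ hr (x i) (δ / 2)
    _ = 2 ^ r * ((1 + δ / 2) ^ r * (∑ i, ∫ u in ball (x i) (δ / 2), (1 + ‖u‖) ^ (-r) ∂μ) /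
          μ.real (ball 0 (δ / 2))) := by
        rw [← Finset.mul_sum, ← Finset.sum_div, ← Finset.mul_sum]
    _ ≤ packingConst μ δ r := by
        unfold packingConst
        gcongr
        exact sum_setIntegral_ball_le μ hr hx

end Packing

section MatrixNorm

variable {𝕜 : Type*} [RCLike 𝕜] {m n : Type*} [Fintype m] [Fintype n]

theorem norm_sq_mulVec_le_of_sum_norm_le {A : Matrix m n 𝕜} {r c : ℝ}
    (hr : 0 ≤ r) (hrow : ∀ i, ∑ j, ‖A i j‖ ≤ r) (hcol : ∀ j, ∑ i, ‖A i j‖ ≤ c) (v : n → 𝕜) :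
    ∑ i, ‖(A *ᵥ v) i‖ ^ 2 ≤ r * c * ∑ j, ‖v j‖ ^ 2 := by
  have hentry (i : m) : ‖(A *ᵥ v) i‖ ^ 2 ≤ r * ∑ j, ‖A i j‖ * ‖v j‖ ^ 2 :=
    calc ‖(A *ᵥ v) i‖ ^ 2 ≤ (∑ j, ‖A i j‖ * ‖v j‖) ^ 2 := by
          gcongr
          exact (norm_sum_le _ _).trans_eq (by simp only [norm_mul])
      _ ≤ (∑ j, ‖A i j‖) * ∑ j, ‖A i j‖ * ‖v j‖ ^ 2 :=
          Finset.sum_sq_le_sum_mul_sum_of_sq_le_mul _ (fun _ _ => norm_nonneg _)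
            (fun _ _ => by positivity) fun _ _ => le_of_eq (by ring)
      _ ≤ r * ∑ j, ‖A i j‖ * ‖v j‖ ^ 2 := by gcongr; exact hrow i
  calc ∑ i, ‖(A *ᵥ v) i‖ ^ 2 ≤ ∑ i, r * ∑ j, ‖A i j‖ * ‖v j‖ ^ 2 :=
        Finset.sum_le_sum fun i _ => hentry i
    _ = r * ∑ j, (∑ i, ‖A i j‖) * ‖v j‖ ^ 2 := by
        rw [← Finset.mul_sum, Finset.sum_comm]
        simp_rw [Finset.sum_mul]
    _ ≤ r * ∑ j, c * ‖v j‖ ^ 2 := by gcongr with j; exact hcol j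
    _ = r * c * ∑ j, ‖v j‖ ^ 2 := by rw [← Finset.mul_sum, mul_assoc]

open scoped Matrix.Norms.L2Operator

variable [DecidableEq n]

theorem l2_opNorm_le_sqrt_of_sum_norm_le {A : Matrix m n 𝕜} {r c : ℝ}
    (hr : 0 ≤ r) (hrow : ∀ i, ∑ j, ‖A i j‖ ≤ r) (hcol : ∀ j, ∑ i, ‖A i j‖ ≤ c) :
    ‖A‖ ≤ √(r * c) := by
  rw [l2_opNorm_def]
  refine ContinuousLinearMap.opNorm_le_bound _ (Real.sqrt_nonneg _) fun v => ?_
  rw [EuclideanSpace.norm_eq, EuclideanSpace.norm_eq, ← Real.sqrt_mul' _ (by positivity)]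
  exact Real.sqrt_le_sqrt (norm_sq_mulVec_le_of_sum_norm_le hr hrow hcol v)

theorem norm_apply_le_l2_opNorm (A : Matrix m n 𝕜) (i : m) (j : n) :
    ‖A i j‖ ≤ ‖A‖ := by
  simpa using (PiLp.norm_apply_le _ i).trans (A.l2_opNorm_mulVec (EuclideanSpace.single j 1))

theorem l2_opNorm_diagonal_diag_le (A : Matrix n n 𝕜) :
    ‖diagonal A.diag‖ ≤ ‖A‖ := by
  rw [l2_opNorm_diagonal]
  exact (pi_norm_le_iff_of_nonneg (norm_nonneg A)).mpr fun i => norm_apply_le_l2_opNorm A i i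

theorem opBound_of_l2_opNorm_le {n : ℕ} {A : Matrix (Fin n) (Fin n) ℝ} {C : ℝ} (h : ‖A‖ ≤ C) :
    opBound A C := fun v => by
  have hv := (A.l2_opNorm_mulVec (WithLp.toLp 2 v)).trans
    (mul_le_mul_of_nonneg_right h (norm_nonneg _))
  simp only [EuclideanSpace.norm_eq, Real.norm_eq_abs, sq_abs] at hv
  exact hv

theorem l2_opNorm_of_apply_sub_le {E : Type*} [NormedAddCommGroup E] [NormedSpace ℝ E]
    [FiniteDimensional ℝ E] [MeasurableSpace E] [BorelSpace E] (μ : Measure E)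
    [μ.IsAddHaarMeasure] {x : n → E} {h : E → ℝ} {δ C r : ℝ} (hδ : 0 < δ)
    (hx : Pairwise fun i j => δ ≤ ‖x i - x j‖) (hr : (Module.finrank ℝ E : ℝ) < r)
    (hdecay : ∀ z, |h z| ≤ C / (1 + ‖z‖ ^ r)) :
    ‖Matrix.of fun i j => h (x i - x j)‖ ≤ C * packingConst μ δ r := by
  have hC : 0 ≤ C :=
    zero_mul (1 + ‖(0 : E)‖ ^ r) ▸
      (le_div_iff₀ (by positivity)).mp ((abs_nonneg _).trans (hdecay 0))
  have hK : 0 ≤ C * packingConst μ δ r := mul_nonneg hC (packingConst_nonneg μ hδ.le r)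
  have hsum (y : n → E) (hy : Pairwise fun i j => δ ≤ ‖y i - y j‖) :
      ∑ i, |h (y i)| ≤ C * packingConst μ δ r :=
    calc ∑ i, |h (y i)| ≤ ∑ i, C * (1 / (1 + ‖y i‖ ^ r)) :=
          Finset.sum_le_sum fun i _ => by rw [mul_one_div]; exact hdecay _
      _ = C * ∑ i, 1 / (1 + ‖y i‖ ^ r) := (Finset.mul_sum ..).symm
      _ ≤ C * packingConst μ δ r := by
          gcongr
          exact sum_one_div_one_add_norm_rpow_le μ hδ hr hy
  rw [← Real.sqrt_mul_self hK]
  refine l2_opNorm_le_sqrt_of_sum_norm_le hK (fun i => hsum (x i - x ·) fun j k hjk => ?_)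
    fun j => hsum (x · - x j) fun i k hik => ?_
  · simpa only [sub_sub_sub_cancel_left] using hx hjk.symm
  · simpa only [sub_sub_sub_cancel_right] using hx hik

end MatrixNorm

section Coercive

open scoped Matrix.Norms.L2Operator RealInnerProductSpace

variable {n : Type*} [Fintype n] [DecidableEq n]

/-- The quadratic form of `A` is bounded below by `c` times the squared Euclidean norm; for
symmetric `A` this says that the smallest eigenvalue of `A` is at least `c`. -/
def IsCoerciveWith (c : ℝ) (A : Matrix n n ℝ) : Prop :=
  ∀ v : n → ℝ, c * ∑ i, v i ^ 2 ≤ v ⬝ᵥ A *ᵥ v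

namespace IsCoerciveWith

variable {c : ℝ} {A : Matrix n n ℝ}

theorem mul_norm_sq_le_inner (h : IsCoerciveWith c A) (v : EuclideanSpace ℝ n) :
    c * ‖v‖ ^ 2 ≤ ⟪v, toEuclideanCLM (𝕜 := ℝ) A v⟫ := by
  simpa only [inner_toEuclideanCLM, EuclideanSpace.real_norm_sq_eq] using h v.ofLp

theorem mul_norm_le (h : IsCoerciveWith c A) (v : EuclideanSpace ℝ n) :
    c * ‖v‖ ≤ ‖toEuclideanCLM (𝕜 := ℝ) A v‖ := by
  rcases (norm_nonneg v).eq_or_lt with hv | hv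
  · rw [← hv, mul_zero]
    exact norm_nonneg _
  · refine le_of_mul_le_mul_left ?_ hv
    calc ‖v‖ * (c * ‖v‖) = c * ‖v‖ ^ 2 := by ring
      _ ≤ ⟪v, toEuclideanCLM (𝕜 := ℝ) A v⟫ := h.mul_norm_sq_le_inner v
      _ ≤ ‖v‖ * ‖toEuclideanCLM (𝕜 := ℝ) A v‖ := real_inner_le_norm _ _

theorem isUnit (h : IsCoerciveWith c A) (hc : 0 < c) : IsUnit A := by
  rw [← mulVec_injective_iff_isUnit, ← coe_mulVecLin, ← LinearMap.ker_eq_bot,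
    LinearMap.ker_eq_bot']
  intro v hv
  have hle := h.mul_norm_le (WithLp.toLp 2 v)
  rw [toEuclideanCLM_toLp, ← mulVecLin_apply, hv, WithLp.toLp_zero, norm_zero] at hle
  simpa using nonpos_of_mul_nonpos_right hle hc

theorem mulVec_inv_mulVec (h : IsCoerciveWith c A) (hc : 0 < c) (v : n → ℝ) :
    A *ᵥ A⁻¹ *ᵥ v = v := by
  rw [mulVec_mulVec, mul_nonsing_inv _ ((isUnit_iff_isUnit_det A).mp (h.isUnit hc)), one_mulVec]

theorem l2_opNorm_inv_le (h : IsCoerciveWith c A) (hc : 0 < c) : ‖A⁻¹‖ ≤ c⁻¹ := by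
  rw [← l2_opNorm_toEuclideanCLM]
  refine ContinuousLinearMap.opNorm_le_bound _ (by positivity) fun v => ?_
  rw [inv_mul_eq_div, le_div_iff₀' hc]
  refine (h.mul_norm_le _).trans_eq ?_
  rw [← WithLp.toLp_ofLp 2 v]
  simp only [toEuclideanCLM_toLp, h.mulVec_inv_mulVec hc]

theorem inv (h : IsCoerciveWith c A) (hc : 0 < c) {B : ℝ} (hB : 0 < B) (hAB : ‖A‖ ≤ B) :
    IsCoerciveWith (c / B ^ 2) A⁻¹ := fun v => by
  set w := A⁻¹ *ᵥ v
  have hAw : A *ᵥ w = v := h.mulVec_inv_mulVec hc v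
  have hvw : ∑ i, v i ^ 2 ≤ B ^ 2 * ∑ i, w i ^ 2 := by
    have hle := (A.l2_opNorm_mulVec (WithLp.toLp 2 w)).trans
      (mul_le_mul_of_nonneg_right hAB (norm_nonneg _))
    have hsq := pow_le_pow_left₀ (norm_nonneg _) hle 2
    rw [mul_pow, EuclideanSpace.real_norm_sq_eq, EuclideanSpace.real_norm_sq_eq] at hsq
    simpa [hAw] using hsq
  calc c / B ^ 2 * ∑ i, v i ^ 2 ≤ c / B ^ 2 * (B ^ 2 * ∑ i, w i ^ 2) := by gcongr
    _ = c * ∑ i, w i ^ 2 := by field_simp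
    _ ≤ w ⬝ᵥ A *ᵥ w := h w
    _ = v ⬝ᵥ w := by rw [hAw, dotProduct_comm]

theorem diagonal_diag (h : IsCoerciveWith c A) : IsCoerciveWith c (diagonal A.diag) := fun v => by
  have hdiag (i : n) : c ≤ A i i := by simpa [Pi.single_apply] using h (Pi.single i 1)
  rw [dotProduct, Finset.mul_sum]
  refine Finset.sum_le_sum fun i _ => ?_
  rw [mulVec_diagonal, diag_apply]
  nlinarith [hdiag i, sq_nonneg (v i)]

end IsCoerciveWith

end Coercive

section BoundedPartials

variable {ι κ E : Type*} {A B : ι → Type*}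

/-- Uniform boundedness on `U`, with one bound for all members of the family `F`, whose codomains
may differ. -/
def UniformlyBoundedOn [∀ i, Norm (A i)] (U : Set E) (F : ∀ i, E → A i) : Prop :=
  ∃ C : ℝ, ∀ i, ∀ θ ∈ U, ‖F i θ‖ ≤ C

namespace UniformlyBoundedOn

variable {U : Set E}

theorem add [∀ i, SeminormedAddCommGroup (A i)] {F G : ∀ i, E → A i}
    (hF : UniformlyBoundedOn U F) (hG : UniformlyBoundedOn U G) :
    UniformlyBoundedOn U fun i θ => F i θ + G i θ :=
  let ⟨C, hC⟩ := hF
  let ⟨D, hD⟩ := hG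
  ⟨C + D, fun i θ hθ => norm_add_le_of_le (hC i θ hθ) (hD i θ hθ)⟩

theorem clm_apply [∀ i, SeminormedAddCommGroup (A i)] [∀ i, NormedSpace ℝ (A i)]
    [∀ i, SeminormedAddCommGroup (B i)] [∀ i, NormedSpace ℝ (B i)] {F : ∀ i, E → A i}
    (hF : UniformlyBoundedOn U F) {L : ∀ i, A i →L[ℝ] B i} {D : ℝ} (hL : ∀ i, ‖L i‖ ≤ D) :
    UniformlyBoundedOn U fun i θ => L i (F i θ) :=
  let ⟨C, hC⟩ := hF
  ⟨D * C, fun i θ hθ => (L i).le_of_opNorm_le_of_le (hL i) (hC i θ hθ)⟩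

theorem mul [∀ i, NonUnitalSeminormedRing (A i)] {F G : ∀ i, E → A i}
    (hF : UniformlyBoundedOn U F) (hG : UniformlyBoundedOn U G) :
    UniformlyBoundedOn U fun i θ => F i θ * G i θ :=
  let ⟨C, hC⟩ := hF
  let ⟨D, hD⟩ := hG
  ⟨C * D, fun i θ hθ => norm_mul_le_of_le (hC i θ hθ) (hD i θ hθ)⟩

end UniformlyBoundedOn

variable [NormedAddCommGroup E] [NormedSpace ℝ E]

/-- On `U`, the iterated partial derivatives of order at most `m` of the members of the family `F`,
in the directions `e`, exist and are bounded uniformly over the family. The derivative is a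
witness `F'` rather than `fderiv`, so that derivative formulas valid only on `U` can be used
directly. -/
def HasBoundedPartials [∀ i, NormedAddCommGroup (A i)] [∀ i, NormedSpace ℝ (A i)]
    (e : κ → E) (U : Set E) : ℕ → (∀ i, E → A i) → Prop
  | 0, F => UniformlyBoundedOn U F
  | m + 1, F => UniformlyBoundedOn U F ∧ ∃ F' : ∀ i, E → E →L[ℝ] A i,
      (∀ i, ∀ θ ∈ U, HasFDerivAt (F i) (F' i θ) θ) ∧
        ∀ j, HasBoundedPartials e U m fun i θ => F' i θ (e j)

variable {e : κ → E} {U : Set E} {m : ℕ}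

section Linear

variable [∀ i, NormedAddCommGroup (A i)] [∀ i, NormedSpace ℝ (A i)]
  [∀ i, NormedAddCommGroup (B i)] [∀ i, NormedSpace ℝ (B i)] {F G : ∀ i, E → A i}

namespace HasBoundedPartials

theorem uniformlyBoundedOn (hF : HasBoundedPartials e U m F) : UniformlyBoundedOn U F := by
  cases m with
  | zero => exact hF
  | succ m => exact hF.1

theorem of_succ (hF : HasBoundedPartials e U (m + 1) F) : HasBoundedPartials e U m F := by
  induction m generalizing F with
  | zero => exact hF.1
  | succ m ih =>
    obtain ⟨hb, F', hF', hpart⟩ := hF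
    exact ⟨hb, F', hF', fun j => ih (hpart j)⟩

theorem add (hF : HasBoundedPartials e U m F) (hG : HasBoundedPartials e U m G) :
    HasBoundedPartials e U m fun i θ => F i θ + G i θ := by
  induction m generalizing F G with
  | zero => exact UniformlyBoundedOn.add hF hG
  | succ m ih =>
    obtain ⟨hbF, F', hF', hpF⟩ := hF
    obtain ⟨hbG, G', hG', hpG⟩ := hG
    exact ⟨hbF.add hbG, fun i θ => F' i θ + G' i θ,
      fun i θ hθ => (hF' i θ hθ).add (hG' i θ hθ), fun j => ih (hpF j) (hpG j)⟩

theorem clm_apply (hF : HasBoundedPartials e U m F) {L : ∀ i, A i →L[ℝ] B i} {D : ℝ}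
    (hL : ∀ i, ‖L i‖ ≤ D) : HasBoundedPartials e U m fun i θ => L i (F i θ) := by
  induction m generalizing F with
  | zero => exact UniformlyBoundedOn.clm_apply hF hL
  | succ m ih =>
    obtain ⟨hb, F', hF', hpart⟩ := hF
    exact ⟨hb.clm_apply hL, fun i θ => (L i).comp (F' i θ),
      fun i θ hθ => (L i).hasFDerivAt.comp θ (hF' i θ hθ), fun j => ih (hpart j)⟩

theorem neg (hF : HasBoundedPartials e U m F) : HasBoundedPartials e U m fun i θ => -F i θ :=
  hF.clm_apply (L := fun i => -ContinuousLinearMap.id ℝ (A i)) (D := 1) fun i => by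
    rw [norm_neg]
    exact ContinuousLinearMap.norm_id_le

end HasBoundedPartials

end Linear

section Algebra

variable [∀ i, NormedRing (A i)] {F G : ∀ i, E → A i}

variable [∀ i, NormedAlgebra ℝ (A i)]

theorem HasBoundedPartials.mul (hF : HasBoundedPartials e U m F)
    (hG : HasBoundedPartials e U m G) : HasBoundedPartials e U m fun i θ => F i θ * G i θ := by
  induction m generalizing F G with
  | zero => exact UniformlyBoundedOn.mul hF hG
  | succ m ih =>
    have ⟨hbF, F', hF', hpF⟩ := hF
    have ⟨hbG, G', hG', hpG⟩ := hG
    exact ⟨hbF.mul hbG, _, fun i θ hθ => (hF' i θ hθ).mul' (hG' i θ hθ),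
      fun j => (ih hF.of_succ (hpG j)).add (ih (hpF j) hG.of_succ)⟩

theorem hasFDerivAt_ringInverse_comp {R : Type*} [NormedRing R] [HasSummableGeomSeries R]
    [NormedAlgebra ℝ R] {f : E → R} {f' : E →L[ℝ] R} {θ : E} (hf : HasFDerivAt f f' θ)
    (hu : IsUnit (f θ)) :
    HasFDerivAt (fun θ => Ring.inverse (f θ))
      (-(ContinuousLinearMap.mulLeftRight ℝ R (Ring.inverse (f θ)) (Ring.inverse (f θ))).comp f')
      θ := by
  obtain ⟨u, hu⟩ := hu
  have hinv := hasFDerivAt_ringInverse (𝕜 := ℝ) u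
  rw [hu] at hinv
  rw [← hu, Ring.inverse_unit]
  exact hinv.comp θ hf

theorem HasBoundedPartials.ringInverse [∀ i, HasSummableGeomSeries (A i)]
    (hF : HasBoundedPartials e U m F) (hu : ∀ i, ∀ θ ∈ U, IsUnit (F i θ))
    (hb : UniformlyBoundedOn U fun i θ => Ring.inverse (F i θ)) :
    HasBoundedPartials e U m fun i θ => Ring.inverse (F i θ) := by
  induction m with
  | zero => exact hb
  | succ m ih =>
    have hinv := ih hF.of_succ
    obtain ⟨-, F', hF', hpart⟩ := hF
    exact ⟨hb, _, fun i θ hθ => hasFDerivAt_ringInverse_comp (hF' i θ hθ) (hu i θ hθ),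
      fun j => ((hinv.mul (hpart j)).mul hinv).neg⟩

end Algebra

end BoundedPartials

section LeaveOneOut

open scoped Matrix.Norms.L2Operator

variable {ι κ E : Type*} {N : ι → Type*} [∀ i, Fintype (N i)] [∀ i, DecidableEq (N i)]
  {U : Set E} {c : ℝ} {F : ∀ i, E → Matrix (N i) (N i) ℝ}

theorem UniformlyBoundedOn.exists_isCoerciveWith_inv (hF : UniformlyBoundedOn U F) (hc : 0 < c)
    (h : ∀ i, ∀ θ ∈ U, IsCoerciveWith c (F i θ)) :
    ∃ c' > 0, ∀ i, ∀ θ ∈ U, IsCoerciveWith c' (F i θ)⁻¹ := by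
  obtain ⟨C, hC⟩ := hF
  have hB : 0 < max C 1 := lt_max_of_lt_right one_pos
  exact ⟨c / max C 1 ^ 2, by positivity,
    fun i θ hθ => (h i θ hθ).inv hc hB ((hC i θ hθ).trans (le_max_left _ _))⟩

variable [NormedAddCommGroup E] [NormedSpace ℝ E] {e : κ → E} {m : ℕ}

theorem HasBoundedPartials.inv_of_isCoerciveWith (hF : HasBoundedPartials e U m F) (hc : 0 < c)
    (h : ∀ i, ∀ θ ∈ U, IsCoerciveWith c (F i θ)) :
    HasBoundedPartials e U m fun i θ => (F i θ)⁻¹ := by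
  simp_rw [nonsing_inv_eq_ringInverse]
  refine hF.ringInverse (fun i θ hθ => (h i θ hθ).isUnit hc) ⟨c⁻¹, fun i θ hθ => ?_⟩
  simpa only [nonsing_inv_eq_ringInverse] using (h i θ hθ).l2_opNorm_inv_le hc

theorem HasBoundedPartials.diagonal_diag (hF : HasBoundedPartials e U m F) :
    HasBoundedPartials e U m fun i θ => diagonal (F i θ).diag :=
  hF.clm_apply
    (L := fun i => (diagonalLinearMap (N i) ℝ ℝ ∘ₗ diagLinearMap (N i) ℝ ℝ).mkContinuous 1
      fun A => (l2_opNorm_diagonal_diag_le A).trans_eq (one_mul _).symm)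
    fun _ => LinearMap.mkContinuous_norm_le _ zero_le_one _

/-- The matrix `A⁻¹ diag(A⁻¹)⁻² A⁻¹`. For a covariance matrix `A`, the quadratic form of this
matrix at `y` is the sum of the squared errors of the leave-one-out predictions of the entries
of `y`. -/
def looMatrix {n : Type*} [Fintype n] [DecidableEq n] (A : Matrix n n ℝ) : Matrix n n ℝ :=
  A⁻¹ * (diagonal A⁻¹.diag)⁻¹ ^ 2 * A⁻¹

protected theorem HasBoundedPartials.looMatrix (hF : HasBoundedPartials e U m F) (hc : 0 < c)
    (h : ∀ i, ∀ θ ∈ U, IsCoerciveWith c (F i θ)) :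
    HasBoundedPartials e U m fun i θ => looMatrix (F i θ) := by
  obtain ⟨c', hc', h'⟩ := hF.uniformlyBoundedOn.exists_isCoerciveWith_inv hc h
  have hinv := hF.inv_of_isCoerciveWith hc h
  have hdiag := hinv.diagonal_diag.inv_of_isCoerciveWith hc'
    fun i θ hθ => (h' i θ hθ).diagonal_diag
  simp_rw [looMatrix, sq]
  exact (hinv.mul (hdiag.mul hdiag)).mul hinv

end LeaveOneOut

section PartialDerivative

variable {p : ℕ}

theorem contDiffOn_pder {U : Set (Euc p)} (hU : IsOpen U) {f : Euc p → ℝ}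
    {m : WithTop ℕ∞} (hf : ContDiffOn ℝ (m + 1) f U) (j : Fin p) : ContDiffOn ℝ m (pder j f) U :=
  (hf.fderiv_of_isOpen hU le_rfl).clm_apply contDiffOn_const

theorem pder_clm_comp {A : Type*} [NormedAddCommGroup A] [NormedSpace ℝ A]
    (L : A →L[ℝ] ℝ) {G : Euc p → A} {G' : Euc p →L[ℝ] A} {θ : Euc p} (hG : HasFDerivAt G G' θ)
    (j : Fin p) : pder j (fun θ => L (G θ)) θ = L (G' (EuclideanSpace.single j 1)) := by
  have hLG : HasFDerivAt (fun θ => L (G θ)) (L.comp G') θ := L.hasFDerivAt.comp θ hG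
  rw [pder, hLG.fderiv, ContinuousLinearMap.comp_apply]

end PartialDerivative

section CorrelationMatrix

theorem hasFDerivAt_matrix_of_apply {E m n : Type*} [NormedAddCommGroup E] [NormedSpace ℝ E]
    [Finite m] [Finite n] {M : E → Matrix m n ℝ} {M' : m → n → E →L[ℝ] ℝ} {θ : E}
    (h : ∀ i j, HasFDerivAt (fun θ => M θ i j) (M' i j) θ) :
    HasFDerivAt M (ContinuousLinearMap.pi fun i => ContinuousLinearMap.pi (M' i)) θ := by
  have := Fintype.ofFinite m
  have := Fintype.ofFinite n
  exact hasFDerivAt_pi.mpr fun i => hasFDerivAt_pi.mpr (h i)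

open scoped Matrix.Norms.L2Operator

variable {d p : ℕ} {x : ℕ → Euc d} {U : Set (Euc p)} {δ C r : ℝ} {kern : Euc p → Euc d → ℝ}

theorem uniformlyBoundedOn_Rmat (hδ : 0 < δ) (hx : Pairwise fun i j => δ ≤ ‖x i - x j‖)
    (hr : d < r) (hdecay : ∀ θ ∈ U, ∀ z, |kern θ z| ≤ C / (1 + ‖z‖ ^ r)) :
    UniformlyBoundedOn U (Rmat x kern) :=
  ⟨C * packingConst volume δ r, fun n θ hθ =>
    l2_opNorm_of_apply_sub_le volume hδ (fun _ _ hij => hx (Fin.val_injective.ne hij))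
      (by rwa [finrank_euclideanSpace_fin]) (hdecay θ hθ)⟩

theorem HasBoundedPartials.Rmat_succ {m : ℕ} (hb : UniformlyBoundedOn U (Rmat x kern))
    (hdiff : ∀ θ ∈ U, ∀ z, DifferentiableAt ℝ (kern · z) θ)
    (hpart : ∀ j, HasBoundedPartials (fun k : Fin p => EuclideanSpace.single k (1 : ℝ)) U m
      (Rmat x fun θ z => pder j (kern · z) θ)) :
    HasBoundedPartials (fun k : Fin p => EuclideanSpace.single k (1 : ℝ)) U (m + 1)
      (Rmat x kern) :=
  ⟨hb, _, fun _ θ hθ => hasFDerivAt_matrix_of_apply fun _ _ => (hdiff θ hθ _).hasFDerivAt, hpart⟩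

theorem hasBoundedPartials_two_Rmat (hU : IsOpen U) (hδ : 0 < δ)
    (hx : Pairwise fun i j => δ ≤ ‖x i - x j‖) (hr : d < r)
    (hsmooth : ∀ z, ContDiffOn ℝ 2 (kern · z) U)
    (hdecay : ∀ θ ∈ U, ∀ z, |kern θ z| ≤ C / (1 + ‖z‖ ^ r))
    (hdecay1 : ∀ θ ∈ U, ∀ z j, |pder j (kern · z) θ| ≤ C / (1 + ‖z‖ ^ r))
    (hdecay2 : ∀ θ ∈ U, ∀ z j k, |pder k (pder j (kern · z)) θ| ≤ C / (1 + ‖z‖ ^ r)) :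
    HasBoundedPartials (fun k : Fin p => EuclideanSpace.single k (1 : ℝ)) U 2 (Rmat x kern) := by
  have hdiff {f : Euc p → ℝ} (hf : ContDiffOn ℝ 1 f U) : ∀ θ ∈ U, DifferentiableAt ℝ f θ :=
    fun θ hθ => (hf.contDiffAt (hU.mem_nhds hθ)).differentiableAt one_ne_zero
  have hsmooth1 (z : Euc d) (j : Fin p) : ContDiffOn ℝ 1 (pder j (kern · z)) U :=
    contDiffOn_pder hU ((hsmooth z).of_le (by norm_num)) j
  refine .Rmat_succ (uniformlyBoundedOn_Rmat hδ hx hr hdecay)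
    (fun θ hθ z => hdiff ((hsmooth z).of_le one_le_two) θ hθ) fun j => ?_
  refine .Rmat_succ (uniformlyBoundedOn_Rmat hδ hx hr fun θ hθ z => hdecay1 θ hθ z j)
    (fun θ hθ z => hdiff (hsmooth1 z j) θ hθ) fun k => ?_
  exact uniformlyBoundedOn_Rmat hδ hx hr fun θ hθ z => hdecay2 θ hθ z j k

end CorrelationMatrix

section Hessian

theorem HasBoundedPartials.exists_hessian {p : ℕ} {ι : Type*} {A : ι → Type*}
    [∀ i, NormedAddCommGroup (A i)] [∀ i, NormedSpace ℝ (A i)] {U : Set (Euc p)} (hU : IsOpen U)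
    {F : ∀ i, Euc p → A i}
    (hF : HasBoundedPartials (fun k : Fin p => EuclideanSpace.single k (1 : ℝ)) U 2 F) :
    ∃ H : ∀ i, Euc p → Fin p → Fin p → A i,
      (∀ i, ∀ θ ∈ U, ∀ (j k : Fin p) (L : A i →L[ℝ] ℝ),
        pder k (pder j fun θ => L (F i θ)) θ = L (H i θ j k)) ∧
      ∃ C : ℝ, ∀ i, ∀ θ ∈ U, ∀ j k, ‖H i θ j k‖ ≤ C := by
  obtain ⟨-, F', hF', hpart⟩ := hF
  choose F'' hF'' hbound using fun j => (hpart j).2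
  choose C hC using hbound
  refine ⟨fun i θ j k => F'' j i θ (EuclideanSpace.single k 1), fun i θ hθ j k L => ?_, ?_⟩
  · have hfirst : pder j (fun θ => L (F i θ)) =ᶠ[nhds θ]
        fun θ => L (F' i θ (EuclideanSpace.single j 1)) := by
      filter_upwards [hU.mem_nhds hθ] with t ht using pder_clm_comp L (hF' i t ht) j
    rw [pder, hfirst.fderiv_eq]
    exact pder_clm_comp L (hF'' j i θ hθ) k
  · obtain ⟨D, hD⟩ := (finite_range (Function.uncurry C)).bddAbove
    exact ⟨D, fun i θ hθ j k => (hC j k i θ hθ).trans (hD ⟨(j, k), rfl⟩)⟩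

open scoped Matrix.Norms.L2Operator

/-- The value `y ⬝ᵥ A *ᵥ y` of a quadratic form at a fixed vector `y`, as a continuous linear
functional of the matrix `A`. -/
def quadFormCLM {n : Type*} [Fintype n] [DecidableEq n] (y : n → ℝ) : Matrix n n ℝ →L[ℝ] ℝ :=
  LinearMap.toContinuousLinearMap
    { toFun := fun A => y ⬝ᵥ A *ᵥ y
      map_add' := fun A B => by rw [add_mulVec, dotProduct_add]
      map_smul' := fun a A => by rw [smul_mulVec, dotProduct_smul, RingHom.id_apply] }

theorem CVcrit_eq_quadFormCLM {d p n : ℕ} (x : ℕ → Euc d) (kern : Euc p → Euc d → ℝ)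
    (y : Fin n → ℝ) :
    CVcrit x kern n y = fun θ => ((1 / n : ℝ) • quadFormCLM y) (looMatrix (Rmat x kern n θ)) :=
  rfl

theorem CV_hessian_formula_general {d p : ℕ} {U : Set (Euc p)} (hU : IsOpen U) {x : ℕ → Euc d}
    {kern : Euc p → Euc d → ℝ} {δ : ℝ} (hδ : 0 < δ)
    (hx : Pairwise fun i j => δ ≤ ‖x i - x j‖) {c : ℝ} (hc : 0 < c)
    (hcoercive : ∀ n, ∀ θ ∈ U, IsCoerciveWith c (Rmat x kern n θ))
    (hsmooth : ∀ z, ContDiffOn ℝ 2 (kern · z) U) {C r : ℝ} (hr : d < r)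
    (hdecay : ∀ θ ∈ U, ∀ z, |kern θ z| ≤ C / (1 + ‖z‖ ^ r))
    (hdecay1 : ∀ θ ∈ U, ∀ z j, |pder j (kern · z) θ| ≤ C / (1 + ‖z‖ ^ r))
    (hdecay2 : ∀ θ ∈ U, ∀ z j k, |pder k (pder j (kern · z)) θ| ≤ C / (1 + ‖z‖ ^ r)) :
    ∃ Cmat : (n : ℕ) → Euc p → Fin p → Fin p → Matrix (Fin n) (Fin n) ℝ,
      (∀ n, ∀ θ ∈ U, ∀ (j k : Fin p) (y : Fin n → ℝ),
        pder k (pder j (CVcrit x kern n y)) θ = (1 / n) * (y ⬝ᵥ Cmat n θ j k *ᵥ y)) ∧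
      ∃ CC : ℝ, ∀ n, ∀ θ ∈ U, ∀ j k, opBound (Cmat n θ j k) CC := by
  have hR := hasBoundedPartials_two_Rmat hU hδ hx hr hsmooth hdecay hdecay1 hdecay2
  obtain ⟨H, hH, CC, hCC⟩ := (hR.looMatrix hc hcoercive).exists_hessian hU
  refine ⟨H, fun n θ hθ j k y => ?_, CC, fun n θ hθ j k => opBound_of_l2_opNorm_le (hCC n θ hθ j k)⟩
  rw [CVcrit_eq_quadFormCLM]
  exact hH n θ hθ j k _

end Hessian

/-- Lemma C.3: the second derivatives of the cross-validation criterion are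
quadratic forms with uniformly bounded matrices. -/
theorem CV_hessian_formula
    {d p : ℕ} (Θ : Set (Euc p)) (hΘcompact : IsCompact Θ)
    (x : ℕ → Euc d) (kern : Euc p → Euc d → ℝ)
    -- Condition 10 (minimal distance between observation points)
    (cx : ℝ) (hcx : 0 < cx) (hmindist : ∀ i j : ℕ, i ≠ j → cx ≤ ‖x i - x j‖)
    -- Condition 11 (uniformly positive definite correlation matrices)
    (cR1 : ℝ) (hcR1 : 0 < cR1)
    (heigR : ∀ (n : ℕ), ∀ θ ∈ Θ, ∀ v : Fin n → ℝ,
      cR1 * (∑ i, v i ^ 2) ≤ v ⬝ᵥ (Rmat x kern n θ).mulVec v)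
    -- Condition 12 (third-order smoothness in θ and decay of the correlation)
    (hsmooth : ∀ z : Euc d, ∀ θ ∈ interior Θ, ContDiffAt ℝ 3 (fun θ' => kern θ' z) θ)
    (CR2 cR2 : ℝ) (hCR2 : 0 < CR2) (hcR2 : 0 < cR2)
    (hdecay : ∀ θ ∈ Θ, ∀ z : Euc d,
      |kern θ z| ≤ CR2 / (1 + ‖z‖ ^ ((d : ℝ) + cR2)))
    (hdecay1 : ∀ θ ∈ interior Θ, ∀ (z : Euc d) (j : Fin p),
      |pder j (fun θ' => kern θ' z) θ| ≤ CR2 / (1 + ‖z‖ ^ ((d : ℝ) + cR2)))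
    (hdecay2 : ∀ θ ∈ interior Θ, ∀ (z : Euc d) (j k : Fin p),
      |pder k (pder j fun θ' => kern θ' z) θ| ≤ CR2 / (1 + ‖z‖ ^ ((d : ℝ) + cR2)))
    (hdecay3 : ∀ θ ∈ interior Θ, ∀ (z : Euc d) (j k l : Fin p),
      |pder l (pder k (pder j fun θ' => kern θ' z)) θ|
        ≤ CR2 / (1 + ‖z‖ ^ ((d : ℝ) + cR2)))
    : ∃ Cmat : (n : ℕ) → Euc p → Fin p → Fin p → Matrix (Fin n) (Fin n) ℝ,
      (∀ (n : ℕ), ∀ θ ∈ interior Θ, ∀ (j k : Fin p) (y : Fin n → ℝ),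
        pder k (pder j (CVcrit x kern n y)) θ
          = (1 / n) * (y ⬝ᵥ (Cmat n θ j k).mulVec y)) ∧
      ∃ CC : ℝ, ∀ (n : ℕ), ∀ θ ∈ interior Θ, ∀ j k : Fin p,
        opBound (Cmat n θ j k) CC := by
  exact CV_hessian_formula_general isOpen_interior hcx (fun i j => hmindist i j) hcR1
    (fun n θ hθ => heigR n θ (interior_subset hθ))
    (fun z θ hθ => ((hsmooth z θ hθ).of_le (by norm_num)).contDiffWithinAt) (by linarith)
    (fun θ hθ => hdecay θ (interior_subset hθ)) hdecay1 hdecay2
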